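/- Let (M_t)_{t∈ℝ} be a family of complete metric spaces and let (μ_{st})_{s,t∈ℝ} be a local approximate flow with data ε > 0, exponents (a_i, b_i), constants C_i, and Lipschitz-control function g, and set K := 2^{1+ε} (Σ_{i=1}^{n} C_i) ζ(1+ε). If I and J are subdivisions of the interval between s and t with J finer than I (i.e., every point of I is a point of J), then d_{st}(μ^I_{st}, μ^J_{st}) ≤ K · g(|t−s|) · g(mesh(I)) · mesh(I)^{ε} · |t−s|. -/

import Mathlib

/-!
The map attached to a chain of points is encoded as `chainMap μ t s L`, the composition of the
maps `μ` from `t` to `s` through the list `L` of intermediate points.  Since `μ t t = id`, repeated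
points and endpoints listed among the intermediate points do not matter, and two chains sharing
a point can be cut and glued there.

The theorem is a sewing argument.  For one interval (`edist_chainMap_le_sum`): in a chain of
length `ℓ` with `m` intermediate points, the `m` sums of two consecutive gaps add up to at most
`2ℓ`, so some intermediate point has both adjacent gaps at most `2ℓ/m` (`exists_short_triple`).
Deleting it costs at most `g ℓ · (∑ C i) · (2ℓ/m)^(1+ε)`, by the three-point estimate and the
Lipschitz bound for the outer part of the chain.  Deleting all points in turn costs at most
`g ℓ · (∑ C i) · ∑_m (2ℓ/m)^(1+ε) ≤ K · g ℓ · ℓ^(1+ε)` (`edist_chainMap_le`).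

For subdivisions `I` and `J` (`edist_refine_le`), the steps of `I` are replaced one after
another by the corresponding portions of `J`, starting from the outermost one.  Replacing a step
of length `ℓ ≤ mesh I` costs at most `g |t - s| · K · g (mesh I) · (mesh I)^ε · ℓ`, and the
lengths of the steps add up to `|t - s|`.

Lengths of chains are measured by `pathLen`, which does not refer to the orientation.  The
increasing and decreasing cases are treated together by ordering points by `σ * x`, `σ = ±1`.
-/

open scoped ENNReal

noncomputable section

/-- Extended uniform distance `sup_x edist (u x) (v x)` between two maps. -/
def unifDist {α β : Type*} [PseudoEMetricSpace β] (u v : α → β) : ℝ≥0∞ :=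
  ⨆ x, edist (u x) (v x)

/-- `h` is Lipschitz with (real) constant `K`:
`edist (h y) (h y') ≤ K * edist y y'` for all `y, y'`. -/
def LipWith {α β : Type*} [PseudoEMetricSpace α] [PseudoEMetricSpace β]
    (K : ℝ) (h : α → β) : Prop :=
  ∀ y y', edist (h y) (h y') ≤ ENNReal.ofReal K * edist y y'

/-- The composition `μ (x 0) (x 1) ∘ μ (x 1) (x 2) ∘ ⋯ ∘ μ (x (k-1)) (x k)`
of the maps `μ` along the finite chain of points `x 0, …, x k`. -/
def compAlong {P : Type*} {M : P → Type*} (μ : ∀ x y : P, M y → M x) (x : ℕ → P) :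
    ∀ k : ℕ, M (x k) → M (x 0)
  | 0 => id
  | k+1 => fun m => compAlong μ x k (μ (x k) (x (k+1)) m)

/-- Transport a map `M a → M b` along equalities of base points. -/
def castM {P : Type*} (M : P → Type*) {a b c d : P} (h1 : a = c) (h2 : b = d)
    (f : M a → M b) : M c → M d :=
  fun m => cast (congrArg M h2) (f (cast (congrArg M h1.symm) m))

/-- A subdivision `(t_0, …, t_k)` of the interval between `s` and `t`: a finite sequence
with `t_0 = s`, `t_k = t`, arranged in increasing order if `s < t` and decreasing order
if `s > t`. -/
structure Subdivision (s t : ℝ) where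
  k : ℕ
  pt : ℕ → ℝ
  k_pos : 0 < k
  first : pt 0 = s
  last : pt k = t
  mono_of_le : s ≤ t → ∀ i j, i ≤ j → j ≤ k → pt i ≤ pt j
  anti_of_ge : t ≤ s → ∀ i j, i ≤ j → j ≤ k → pt j ≤ pt i

/-- The mesh `max_{1 ≤ j ≤ k} |t_j - t_{j-1}|` of a subdivision. -/
def Subdivision.mesh {s t : ℝ} (I : Subdivision s t) : ℝ :=
  ⨆ j : Fin I.k, |I.pt (j.1 + 1) - I.pt j.1|

/-- The value `ζ(x) = Σ_{ℓ ≥ 1} ℓ^{-x}` of the Riemann zeta function at a real `x`. -/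
def zetaR (x : ℝ) : ℝ := ∑' m : ℕ, ((m : ℝ) + 1) ^ (-x)

/-- A local approximate flow on a family `(M t)` of complete metric spaces, with data
`ε > 0`, exponents `a i, b i > 0` with `a i + b i = 1 + ε`, constants `C i > 0`, and
Lipschitz-control functions `f` and `g`. -/
structure IsLocalApproxFlow {M : ℝ → Type*} [∀ t, MetricSpace (M t)]
    (μ : ∀ s t : ℝ, M t → M s) (ε : ℝ) (n : ℕ) (a b C : Fin n → ℝ)
    (f g : ℝ → ℝ) : Prop where
  continuous : ∀ s t, Continuous (μ s t)
  id_eq : ∀ t, μ t t = id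
  eps_pos : 0 < ε
  n_pos : 0 < n
  a_pos : ∀ i, 0 < a i
  b_pos : ∀ i, 0 < b i
  ab_eq : ∀ i, a i + b i = 1 + ε
  C_pos : ∀ i, 0 < C i
  f_cont : Continuous f
  f_nonneg : ∀ x, 0 ≤ f x
  f_zero : f 0 = 0
  lip : ∀ s t, LipWith (1 + f (t - s)) (μ s t)
  three_point : ∀ s t u, unifDist (μ s t) (fun x => μ s u (μ u t x)) ≤
    ENNReal.ofReal (∑ i, C i * |t - u| ^ a i * |u - s| ^ b i)
  g_mono : MonotoneOn g (Set.Ici 0)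
  g_cont : ContinuousOn g (Set.Ici 0)
  g_ge_one : ∀ x ∈ Set.Ici (0 : ℝ), 1 ≤ g x
  lip_chain : ∀ (k : ℕ) (u : ℕ → ℝ),
    LipWith (g (∑ j ∈ Finset.range k, |u (j + 1) - u j|)) (compAlong μ u k)

/-- The composition `μ^I_{st} = μ_{t_0 t_1} ∘ ⋯ ∘ μ_{t_{k-1} t_k}` along a subdivision `I`
of the interval between `s` and `t`, viewed as a map `M t → M s`. -/
def Subdivision.comp {M : ℝ → Type*} {s t : ℝ} (I : Subdivision s t)
    (μ : ∀ s t : ℝ, M t → M s) : M t → M s :=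
  castM M I.last I.first (compAlong μ I.pt I.k)

/-! ### Chains of points and their lengths -/

/-- The composition `μ s u₁ ∘ μ u₁ u₂ ∘ ⋯ ∘ μ u_k t` along a list `[u₁, …, u_k]` of
intermediate points.  The endpoints `s` and `t` are not part of the list. -/
def chainMap {M : ℝ → Type*} (μ : ∀ s t : ℝ, M t → M s) (t : ℝ) :
    ∀ (s : ℝ) (_ : List ℝ), M t → M s
  | s, [] => μ s t
  | s, u :: L => fun m => μ s u (chainMap μ t u L m)

/-- The length `|u₁ - s| + |u₂ - u₁| + ⋯ + |u_k - u_{k-1}|` of the path that starts at `s` and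
visits the points of the list `[u₁, …, u_k]`. -/
def pathLen : ℝ → List ℝ → ℝ
  | _, [] => 0
  | s, u :: L => |u - s| + pathLen u L

lemma pathLen_nonneg (L : List ℝ) : ∀ s, 0 ≤ pathLen s L := by
  induction L with
  | nil => intro s; simp [pathLen]
  | cons u L ih => intro s; have := ih u; simp only [pathLen]; positivity

lemma pathLen_append (A : List ℝ) (p : ℝ) (R : List ℝ) :
    ∀ s, pathLen s (A ++ p :: R) = pathLen s (A ++ [p]) + pathLen p R := by
  induction A with
  | nil => intro s; simp [pathLen]
  | cons u A ih => intro s; simp only [List.cons_append, pathLen, ih u]; ring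

lemma pathLen_range (k : ℕ) : ∀ u : ℕ → ℝ,
    pathLen (u 0) ((List.range k).map fun i => u (i + 1)) =
      ∑ j ∈ Finset.range k, |u (j + 1) - u j| := by
  induction k with
  | zero => intro u; simp [pathLen]
  | succ k ih =>
    intro u
    rw [List.range_succ_eq_map, List.map_cons, List.map_map, Finset.sum_range_succ']
    have := ih fun i => u (i + 1)
    simp only [pathLen]
    rw [← this, add_comm]
    rfl

/-- A path that is monotone for the order `x ↦ σ * x`, `σ = ±1`, has length `|t - s|`. -/
lemma pathLen_of_pairwise {σ : ℝ} (hσ : σ = 1 ∨ σ = -1) (t : ℝ) (L : List ℝ) :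
    ∀ s, (s :: (L ++ [t])).Pairwise (fun x y => σ * x ≤ σ * y) →
      pathLen s (L ++ [t]) = |t - s| := by
  induction L with
  | nil => intro s _; simp [pathLen]
  | cons u L ih =>
    intro s hp
    rw [List.cons_append, List.pairwise_cons] at hp
    have h1 := hp.1 u (by simp)
    have h2 := (List.pairwise_cons.1 hp.2).1 t (by simp)
    simp only [List.cons_append, pathLen]
    rw [ih u hp.2]
    rcases hσ with rfl | rfl
    · rw [abs_of_nonneg, abs_of_nonneg, abs_of_nonneg] <;> linarith
    · rw [abs_of_nonpos, abs_of_nonpos, abs_of_nonpos] <;> linarith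

/-- Among the `W.length` consecutive triples of the chain `p, u, W`, some triple is at most as
long as the average.  The extra summand `|u - p|` records that the first gap belongs to only
one triple, which is what makes the induction work. -/
lemma exists_short_triple (W : List ℝ) (hW : W ≠ []) : ∀ p u : ℝ,
    ∃ (A : List ℝ) (x y z : ℝ) (B : List ℝ), p :: u :: W = A ++ x :: y :: z :: B ∧
      W.length * (|y - x| + |z - y|) + |u - p| ≤ 2 * pathLen p (u :: W) := by
  induction W with
  | nil => exact absurd rfl hW
  | cons q B ih =>
    intro p u
    by_cases hB : B = []
    · subst hB
      refine ⟨[], p, u, q, [], rfl, ?_⟩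
      have := abs_nonneg (q - u)
      simp [pathLen]
      linarith
    · obtain ⟨A, x, y, z, B', hdec, hle⟩ := ih hB u q
      simp only [pathLen] at hle ⊢
      have h0 : (0 : ℝ) ≤ B.length := Nat.cast_nonneg _
      rcases le_total (|y - x| + |z - y|) (|u - p| + |q - u|) with hc | hc
      · refine ⟨p :: A, x, y, z, B', by rw [hdec]; rfl, ?_⟩
        push_cast [List.length_cons]
        linarith
      · refine ⟨[], p, u, q, B, rfl, ?_⟩
        have := mul_le_mul_of_nonneg_left hc h0
        push_cast [List.length_cons]
        linarith

/-! ### Composition along chains -/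

section Chains

variable {M : ℝ → Type*} {μ : ∀ s t : ℝ, M t → M s}

lemma chainMap_append (t : ℝ) (A : List ℝ) (p : ℝ) (R : List ℝ) (m : M t) : ∀ s,
    chainMap μ t s (A ++ p :: R) m = chainMap μ p s A (chainMap μ t p R m) := by
  induction A with
  | nil => intro s; rfl
  | cons u A ih => intro s; simp only [List.cons_append, chainMap, ih u]

lemma chainMap_self_cons (hid : ∀ t, μ t t = id) (s t : ℝ) (L : List ℝ) (m : M t) :
    chainMap μ t s (s :: L) m = chainMap μ t s L m := by
  simp [chainMap, hid]

lemma chainMap_concat_self (hid : ∀ t, μ t t = id) (s t : ℝ) (L : List ℝ) (m : M t) :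
    chainMap μ t s (L ++ [t]) m = chainMap μ t s L m := by
  rw [chainMap_append]; simp [chainMap, hid]

lemma compAlong_succ (k : ℕ) : ∀ (u : ℕ → ℝ) (m : M (u (k + 1))),
    compAlong μ u (k + 1) m =
      μ (u 0) (u 1) (compAlong (M := M) μ (fun i => u (i + 1)) k m) := by
  induction k with
  | zero => intro u m; rfl
  | succ k ih => intro u m; exact ih u (μ (u (k + 1)) (u (k + 2)) m)

/-- `compAlong` is peeled from the right and `chainMap` from the left; both give the same map. -/
lemma compAlong_eq (hid : ∀ t, μ t t = id) (k : ℕ) : ∀ (u : ℕ → ℝ) (m : M (u k)),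
    compAlong μ u k m =
      chainMap μ (u k) (u 0) ((List.range k).map fun i => u (i + 1)) m := by
  induction k with
  | zero => intro u m; simp [compAlong, chainMap, hid]
  | succ k ih =>
    intro u m
    rw [compAlong_succ, List.range_succ_eq_map, List.map_cons, List.map_map]
    exact congrArg (μ (u 0) (u 1)) (ih (fun i => u (i + 1)) m)

lemma Subdivision.comp_eq (hid : ∀ t, μ t t = id) {s t : ℝ} (I : Subdivision s t) (m : M t) :
    I.comp μ m = chainMap μ t s ((List.range I.k).map fun i => I.pt (i + 1)) m := by
  obtain ⟨k, pt, hk, first, last, h1, h2⟩ := I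
  subst first last
  exact compAlong_eq hid k pt m

end Chains

/-! ### Estimates for a local approximate flow -/

section Estimates

variable {M : ℝ → Type*} [∀ t, MetricSpace (M t)] {μ : ∀ s t : ℝ, M t → M s} {ε : ℝ} {n : ℕ}
  {a b C : Fin n → ℝ} {f g : ℝ → ℝ}

lemma chainMap_lip (h : IsLocalApproxFlow μ ε n a b C f g) (s t : ℝ) (L : List ℝ) :
    LipWith (g (pathLen s (L ++ [t]))) (chainMap μ t s L) := by
  obtain ⟨k, u, h0, hk, hL⟩ : ∃ (k : ℕ) (u : ℕ → ℝ), u 0 = s ∧ u k = t ∧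
      ((List.range k).map fun i => u (i + 1)) = L ++ [t] := by
    refine ⟨L.length + 1, fun i => (s :: (L ++ [t])).getD i t, rfl, by simp, ?_⟩
    apply List.ext_getElem
    · simp
    · intro i h1 h2
      simp only [List.length_append, List.length_singleton] at h2
      simp [h2]
  subst h0 hk
  intro y y'
  have := h.lip_chain k u y y'
  rw [← pathLen_range, compAlong_eq h.id_eq, compAlong_eq h.id_eq, hL,
    chainMap_concat_self h.id_eq, chainMap_concat_self h.id_eq] at this
  exact this

/-- Applying an outer chain of length at most `ℓ` multiplies distances by at most `g ℓ`. -/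
lemma edist_chainMap_outer (h : IsLocalApproxFlow μ ε n a b C f g) {s t ℓ : ℝ} {L : List ℝ}
    (hL : pathLen s (L ++ [t]) ≤ ℓ) {y y' : M t} {r : ℝ}
    (hr : edist y y' ≤ ENNReal.ofReal r) :
    edist (chainMap μ t s L y) (chainMap μ t s L y') ≤ ENNReal.ofReal (g ℓ * r) := by
  have h0 := pathLen_nonneg (L ++ [t]) s
  have hg : g (pathLen s (L ++ [t])) ≤ g ℓ := h.g_mono h0 (h0.trans hL) hL
  have hg1 := h.g_ge_one ℓ (h0.trans hL)
  rw [ENNReal.ofReal_mul (by linarith)]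
  exact (chainMap_lip h s t L y y').trans
    (mul_le_mul' (ENNReal.ofReal_le_ofReal hg) hr)

/-- The three-point estimate in terms of a common bound `c` for the two gaps. -/
lemma three_point_le (h : IsLocalApproxFlow μ ε n a b C f g) {p u q c : ℝ}
    (h1 : |u - p| ≤ c) (h2 : |q - u| ≤ c) (m : M q) :
    edist (μ p q m) (μ p u (μ u q m)) ≤ ENNReal.ofReal ((∑ i, C i) * c ^ (1 + ε)) := by
  refine ((le_iSup (fun x => edist (μ p q x) (μ p u (μ u q x))) m).trans
    (h.three_point p q u)).trans (ENNReal.ofReal_le_ofReal ?_)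
  rw [Finset.sum_mul]
  refine Finset.sum_le_sum fun i _ => ?_
  have hc : 0 ≤ c := (abs_nonneg _).trans h1
  have ha := h.a_pos i
  have hb := h.b_pos i
  rw [← h.ab_eq i, Real.rpow_add_of_nonneg hc ha.le hb.le, mul_assoc]
  have := h.C_pos i
  gcongr

/-- Sewing on a single interval, with a finite sum: the intermediate points of the chain are
removed one at a time.  The full list `Z` contains both endpoints. -/
lemma edist_chainMap_le_sum (h : IsLocalApproxFlow μ ε n a b C f g) {s t ℓ : ℝ} (x : M t)
    (m : ℕ) : ∀ Z : List ℝ, Z.length = m + 2 → Z.head? = some s → Z.getLast? = some t →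
      pathLen s Z ≤ ℓ →
      edist (μ s t x) (chainMap μ t s Z x) ≤ ENNReal.ofReal
        (g ℓ * ((∑ i, C i) * ∑ k ∈ Finset.range m, (2 * ℓ / (k + 1)) ^ (1 + ε))) := by
  induction m with
  | zero =>
    intro Z hlen hhead hlast _
    obtain ⟨p, q, rfl⟩ := List.length_eq_two.1 hlen
    simp only [List.head?_cons, Option.some.injEq] at hhead
    simp only [List.getLast?_cons_cons, List.getLast?_singleton, Option.some.injEq] at hlast
    subst hhead hlast
    simp [chainMap, h.id_eq]
  | succ m ih =>
    intro Z hlen hhead hlast hℓ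
    have hℓ0 : 0 ≤ ℓ := (pathLen_nonneg Z s).trans hℓ
    obtain ⟨A, p, u, q, B, hZ, hgap⟩ : ∃ (A : List ℝ) (p u q : ℝ) (B : List ℝ),
        Z = A ++ p :: u :: q :: B ∧ (m + 1) * (|u - p| + |q - u|) ≤ 2 * ℓ := by
      obtain _ | ⟨s', _ | ⟨v, W⟩⟩ := Z
      · simp at hlen
      · simp at hlen
      · simp only [List.head?_cons, Option.some.injEq] at hhead
        subst hhead
        have hWl : W.length = m + 1 := by simpa using hlen
        obtain ⟨A, p, u, q, B, hZ, hle⟩ := exists_short_triple W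
          (by rintro rfl; simp at hWl) s' v
        refine ⟨A, p, u, q, B, hZ, ?_⟩
        have := abs_nonneg (v - s')
        rw [hWl] at hle
        push_cast at hle
        simp only [pathLen, sub_self, abs_zero, zero_add] at hle hℓ
        linarith
    subst hZ
    have hm : (0 : ℝ) < m + 1 := by positivity
    have hc : |u - p| + |q - u| ≤ 2 * ℓ / (m + 1) := by
      rw [le_div_iff₀ hm]; linarith
    have hpu := abs_nonneg (u - p)
    have huq := abs_nonneg (q - u)
    have hlen' : (A ++ p :: q :: B).length = m + 2 := by
      simp only [List.length_append, List.length_cons] at hlen ⊢; omega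
    have hhead' : (A ++ p :: q :: B).head? = some s := by
      simpa [List.head?_append] using hhead
    have hlast' : (A ++ p :: q :: B).getLast? = some t := by
      simpa [List.getLast?_append] using hlast
    rw [pathLen_append] at hℓ
    simp only [pathLen] at hℓ
    have hB := pathLen_nonneg B q
    have hℓ' : pathLen s (A ++ p :: q :: B) ≤ ℓ := by
      rw [pathLen_append]
      simp only [pathLen]
      have := abs_sub_le q u p
      linarith
    have hdel : edist (chainMap μ t s (A ++ p :: q :: B) x)
        (chainMap μ t s (A ++ p :: u :: q :: B) x) ≤
        ENNReal.ofReal (g ℓ * ((∑ i, C i) * (2 * ℓ / (m + 1)) ^ (1 + ε))) := by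
      rw [chainMap_append, chainMap_append]
      exact edist_chainMap_outer h (by linarith)
        (three_point_le h (by linarith) (by linarith) _)
    have hg : 0 ≤ g ℓ := zero_le_one.trans (h.g_ge_one ℓ hℓ0)
    have hC : 0 ≤ ∑ i, C i := Finset.sum_nonneg fun i _ => (h.C_pos i).le
    have hS : 0 ≤ ∑ k ∈ Finset.range m, (2 * ℓ / ((k : ℝ) + 1)) ^ (1 + ε) :=
      Finset.sum_nonneg fun k _ => by positivity
    refine (edist_triangle _ _ _).trans
      ((add_le_add (ih _ hlen' hhead' hlast' hℓ') hdel).trans ?_)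
    rw [← ENNReal.ofReal_add (by positivity) (by positivity), Finset.sum_range_succ, mul_add,
      mul_add]

lemma zetaR_nonneg (x : ℝ) : 0 ≤ zetaR x := tsum_nonneg fun m => by positivity

lemma sum_le_zetaR (hε : 0 < ε) {ℓ : ℝ} (hℓ : 0 ≤ ℓ) (m : ℕ) :
    ∑ k ∈ Finset.range m, (2 * ℓ / ((k : ℝ) + 1)) ^ (1 + ε) ≤
      2 ^ (1 + ε) * zetaR (1 + ε) * ℓ ^ (1 + ε) := by
  have hs : Summable fun k : ℕ => ((k : ℝ) + 1) ^ (-(1 + ε)) := by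
    have := (summable_nat_add_iff 1).2
      (Real.summable_nat_rpow (p := -(1 + ε)).2 (by linarith))
    simpa using this
  have hle : ∑ k ∈ Finset.range m, ((k : ℝ) + 1) ^ (-(1 + ε)) ≤ zetaR (1 + ε) :=
    hs.sum_le_tsum _ fun k _ => by positivity
  calc ∑ k ∈ Finset.range m, (2 * ℓ / ((k : ℝ) + 1)) ^ (1 + ε)
      = 2 ^ (1 + ε) * ℓ ^ (1 + ε) * ∑ k ∈ Finset.range m, ((k : ℝ) + 1) ^ (-(1 + ε)) := by
        rw [Finset.mul_sum]
        refine Finset.sum_congr rfl fun k _ => ?_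
        rw [Real.div_rpow (by positivity) (by positivity), Real.mul_rpow (by positivity) hℓ,
          Real.rpow_neg (by positivity), div_eq_mul_inv]
    _ ≤ 2 ^ (1 + ε) * ℓ ^ (1 + ε) * zetaR (1 + ε) := by gcongr
    _ = _ := by ring

/-- Sewing on a single interval. -/
lemma edist_chainMap_le (h : IsLocalApproxFlow μ ε n a b C f g) {K : ℝ}
    (hK : K = 2 ^ (1 + ε) * (∑ i, C i) * zetaR (1 + ε)) {s t ℓ : ℝ} {L : List ℝ}
    (hL : pathLen s (L ++ [t]) = ℓ) (x : M t) :
    edist (μ s t x) (chainMap μ t s L x) ≤ ENNReal.ofReal (g ℓ * (K * ℓ ^ (1 + ε))) := by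
  have hℓ : 0 ≤ ℓ := hL ▸ pathLen_nonneg _ s
  have key := edist_chainMap_le_sum h (s := s) (ℓ := ℓ) x L.length (s :: (L ++ [t])) (by simp)
    rfl (by simp [List.getLast?_cons]) (by simp [pathLen, hL])
  rw [chainMap_self_cons h.id_eq, chainMap_concat_self h.id_eq] at key
  refine key.trans (ENNReal.ofReal_le_ofReal ?_)
  have hg : 0 ≤ g ℓ := zero_le_one.trans (h.g_ge_one ℓ hℓ)
  have hC : 0 ≤ ∑ i, C i := Finset.sum_nonneg fun i _ => (h.C_pos i).le
  refine mul_le_mul_of_nonneg_left ?_ hg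
  calc (∑ i, C i) * ∑ k ∈ Finset.range L.length, (2 * ℓ / ((k : ℝ) + 1)) ^ (1 + ε)
      ≤ (∑ i, C i) * (2 ^ (1 + ε) * zetaR (1 + ε) * ℓ ^ (1 + ε)) :=
        mul_le_mul_of_nonneg_left (sum_le_zetaR h.eps_pos hℓ _) hC
    _ = K * ℓ ^ (1 + ε) := by rw [hK]; ring

/-- Replacement of the coarse chain `U` from `s` to `t` by the finer chain `V`, behind an outer
chain `P` from `s₀` to `s` which already follows the fine subdivision.  The induction on `U`
moves the portion of `V` up to the first point of `U` into `P`. -/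
lemma edist_refine_le (h : IsLocalApproxFlow μ ε n a b C f g) {K : ℝ}
    (hK : K = 2 ^ (1 + ε) * (∑ i, C i) * zetaR (1 + ε)) {σ : ℝ} (hσ : σ = 1 ∨ σ = -1)
    {s₀ t δ ℓ : ℝ} (hδ : 0 ≤ δ) (x : M t) (U : List ℝ) : ∀ (s : ℝ) (V P : List ℝ),
      (s :: U).getLast? = some t →
      (s :: U).IsChain (fun x y => |y - x| ≤ δ) →
      U.Pairwise (fun x y => σ * x ≤ σ * y) →
      (s :: (V ++ [t])).Pairwise (fun x y => σ * x ≤ σ * y) →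
      U ⊆ V →
      pathLen s₀ (P ++ [s]) + pathLen s (V ++ [t]) ≤ ℓ →
      edist (chainMap μ s s₀ P (chainMap μ t s U x)) (chainMap μ s s₀ P (chainMap μ t s V x)) ≤
        ENNReal.ofReal (g ℓ * (K * g δ * δ ^ ε) * pathLen s (V ++ [t])) := by
  have hC : 0 ≤ ∑ i, C i := Finset.sum_nonneg fun i _ => (h.C_pos i).le
  have hK0 : 0 ≤ K := by
    rw [hK]; have := zetaR_nonneg (1 + ε); positivity
  have hgδ : 0 ≤ g δ := zero_le_one.trans (h.g_ge_one δ hδ)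
  -- The cost of replacing a single step of length at most `δ`.
  have step : ∀ (s u : ℝ) (P B : List ℝ) (y : M u), |u - s| ≤ δ →
      (s :: (B ++ [u])).Pairwise (fun x y => σ * x ≤ σ * y) → pathLen s₀ (P ++ [s]) ≤ ℓ →
      edist (chainMap μ s s₀ P (μ s u y)) (chainMap μ s s₀ P (chainMap μ u s B y)) ≤
        ENNReal.ofReal (g ℓ * (K * g δ * δ ^ ε) * pathLen s (B ++ [u])) := by
    intro s u P B y hsu hmono hP
    have hℓ : 0 ≤ ℓ := (pathLen_nonneg _ _).trans hP
    have hgℓ : 0 ≤ g ℓ := zero_le_one.trans (h.g_ge_one ℓ hℓ)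
    have hlen := pathLen_of_pairwise hσ u B s hmono
    refine (edist_chainMap_outer h hP (edist_chainMap_le h hK hlen y)).trans
      (ENNReal.ofReal_le_ofReal ?_)
    have hε := h.eps_pos
    have h0 := abs_nonneg (u - s)
    rw [hlen, mul_assoc, Real.rpow_add_of_nonneg h0 zero_le_one hε.le, Real.rpow_one]
    refine mul_le_mul_of_nonneg_left ?_ hgℓ
    have hg : g |u - s| ≤ g δ := h.g_mono h0 hδ hsu
    calc g |u - s| * (K * (|u - s| * |u - s| ^ ε))
        ≤ g δ * (K * (|u - s| * δ ^ ε)) := by gcongr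
      _ = _ := by ring
  induction U with
  | nil =>
    intro s V P hlast _ _ hV _ hP
    obtain rfl : s = t := by simpa using hlast
    have := pathLen_nonneg (V ++ [s]) s
    exact step s s P V x (by simpa using hδ) hV (by linarith)
  | cons u U ih =>
    intro s V P hlast hchain hU hV hUV hP
    obtain ⟨B, V', rfl⟩ := List.append_of_mem (hUV (List.mem_cons_self))
    rw [List.isChain_cons_cons] at hchain
    rw [List.pairwise_cons] at hU
    have hV1 : (s :: (B ++ [u])).Pairwise (fun x y => σ * x ≤ σ * y) := by
      refine hV.sublist ?_
      simp
    have hV2 : (u :: (V' ++ [t])).Pairwise (fun x y => σ * x ≤ σ * y) := by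
      refine hV.sublist ?_
      simp
    have hV3 : (u :: ((u :: V') ++ [t])).Pairwise (fun x y => σ * x ≤ σ * y) := by
      rw [List.cons_append, List.pairwise_cons]
      refine ⟨fun y hy => ?_, hV2⟩
      rcases List.mem_cons.1 hy with rfl | hy
      · exact le_rfl
      · exact (List.pairwise_cons.1 hV2).1 y hy
    have hsplit : pathLen s (B ++ u :: V' ++ [t]) =
        pathLen s (B ++ [u]) + pathLen u (V' ++ [t]) := by
      rw [List.append_assoc, List.cons_append, pathLen_append]
    have hself : pathLen u (u :: V' ++ [t]) = pathLen u (V' ++ [t]) := by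
      simp [pathLen]
    -- A point of `U` lying in `B` is both before and after `u`, hence equal to `u`.
    have hUV' : U ⊆ u :: V' := by
      intro y hy
      rcases List.mem_append.1 (hUV (List.mem_cons_of_mem _ hy)) with hyB | hyV
      · have h1 := hU.1 y hy
        have h2 : σ * y ≤ σ * u := by
          rw [List.pairwise_cons, List.pairwise_append] at hV1
          exact hV1.2.2.2 y hyB u (by simp)
        have : y = u := by rcases hσ with rfl | rfl <;> linarith
        simp [this]
      · exact hyV
    rw [hsplit] at hP
    have n1 := pathLen_nonneg (B ++ [u]) s
    have n2 := pathLen_nonneg (V' ++ [t]) u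
    have n3 := pathLen_nonneg (P ++ [s]) s₀
    have hgℓ : 0 ≤ g ℓ := zero_le_one.trans (h.g_ge_one ℓ (Set.mem_Ici.2 (by linarith)))
    have e1 := step s u P B (chainMap μ t u U x) hchain.1 hV1 (by linarith)
    have e2 := ih u (u :: V') (P ++ s :: B) (by simpa [List.getLast?_cons_cons] using hlast)
      hchain.2 hU.2 hV3 hUV' (by
        rw [hself, List.append_assoc, List.cons_append, pathLen_append]; linarith)
    rw [chainMap_append, chainMap_append, chainMap_self_cons h.id_eq, hself] at e2
    rw [chainMap_append, hsplit, mul_add, ENNReal.ofReal_add (by positivity) (by positivity)]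
    exact (edist_triangle _ _ _).trans (add_le_add e1 e2)

end Estimates

/-! ### Subdivisions as monotone lists -/

lemma Subdivision.mul_pt_le {s t σ : ℝ} (hσ : σ = 1 ∧ s ≤ t ∨ σ = -1 ∧ t ≤ s)
    (I : Subdivision s t) {i j : ℕ} (hij : i ≤ j) (hj : j ≤ I.k) :
    σ * I.pt i ≤ σ * I.pt j := by
  rcases hσ with ⟨rfl, hst⟩ | ⟨rfl, hst⟩
  · have := I.mono_of_le hst i j hij hj; linarith
  · have := I.anti_of_ge hst i j hij hj; linarith

lemma Subdivision.pairwise {s t σ : ℝ} (hσ : σ = 1 ∧ s ≤ t ∨ σ = -1 ∧ t ≤ s)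
    (I : Subdivision s t) :
    ((List.range (I.k + 1)).map I.pt).Pairwise (fun x y => σ * x ≤ σ * y) := by
  rw [List.pairwise_map]
  refine List.pairwise_lt_range.imp_of_mem fun {i j} _ hj hij => ?_
  exact I.mul_pt_le hσ hij.le (Nat.lt_succ_iff.1 (List.mem_range.1 hj))

lemma Subdivision.range_map {s t : ℝ} (I : Subdivision s t) :
    (List.range (I.k + 1)).map I.pt = s :: (List.range I.k).map fun i => I.pt (i + 1) := by
  rw [List.range_succ_eq_map, List.map_cons, List.map_map, I.first]
  rfl

lemma Subdivision.abs_sub_le_mesh {s t : ℝ} (I : Subdivision s t) {j : ℕ} (hj : j < I.k) :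
    |I.pt (j + 1) - I.pt j| ≤ I.mesh :=
  le_ciSup (f := fun j : Fin I.k => |I.pt (j.1 + 1) - I.pt j.1|)
    (Set.finite_range _).bddAbove ⟨j, hj⟩

/-- For a local approximate flow, with `K = 2^{1+ε} (Σ_i C_i) ζ(1+ε)`: if `I` and `J` are
subdivisions of the interval between `s` and `t` with `J` finer than `I` (every point of
`I` is a point of `J`), then
`d_{st}(μ^I_{st}, μ^J_{st}) ≤ K · g(|t−s|) · g(mesh I) · (mesh I)^ε · |t−s|`. -/
theorem stmt5 {M : ℝ → Type*} [∀ t, MetricSpace (M t)] [∀ t, CompleteSpace (M t)]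
    (μ : ∀ s t : ℝ, M t → M s) (ε : ℝ) (n : ℕ) (a b C : Fin n → ℝ) (f g : ℝ → ℝ)
    (h : IsLocalApproxFlow μ ε n a b C f g)
    (K : ℝ) (hK : K = 2 ^ (1 + ε) * (∑ i, C i) * zetaR (1 + ε))
    (s t : ℝ) (I J : Subdivision s t)
    (hfine : ∀ i ≤ I.k, ∃ j ≤ J.k, J.pt j = I.pt i) :
    unifDist (I.comp μ) (J.comp μ) ≤
      ENNReal.ofReal (K * g |t - s| * g I.mesh * I.mesh ^ ε * |t - s|) := by
  obtain ⟨σ, hσ⟩ : ∃ σ : ℝ, σ = 1 ∧ s ≤ t ∨ σ = -1 ∧ t ≤ s := by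
    rcases le_total s t with hst | hst
    · exact ⟨1, Or.inl ⟨rfl, hst⟩⟩
    · exact ⟨-1, Or.inr ⟨rfl, hst⟩⟩
  have hσ' : σ = 1 ∨ σ = -1 := hσ.imp And.left And.left
  have hmesh : 0 ≤ I.mesh := (abs_nonneg _).trans (I.abs_sub_le_mesh I.k_pos)
  have hI := I.pairwise hσ
  rw [I.range_map] at hI
  have hJ : (s :: ((List.range (J.k + 1)).map J.pt ++ [t])).Pairwise
      (fun x y => σ * x ≤ σ * y) := by
    have hpt : ∀ y ∈ (List.range (J.k + 1)).map J.pt, ∃ j ≤ J.k, J.pt j = y := by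
      intro y hy
      obtain ⟨j, hj, rfl⟩ := List.mem_map.1 hy
      exact ⟨j, Nat.lt_succ_iff.1 (List.mem_range.1 hj), rfl⟩
    have hst : σ * s ≤ σ * t := by
      have := J.mul_pt_le hσ (Nat.zero_le J.k) le_rfl
      rwa [J.first, J.last] at this
    rw [List.pairwise_cons, List.pairwise_append]
    refine ⟨fun y hy => ?_, J.pairwise hσ, List.pairwise_singleton _ _, fun y hy z hz => ?_⟩
    · rcases List.mem_append.1 hy with hy | hy
      · obtain ⟨j, hj, rfl⟩ := hpt y hy
        have := J.mul_pt_le hσ (Nat.zero_le j) hj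
        rwa [J.first] at this
      · rwa [List.mem_singleton.1 hy]
    · rw [List.mem_singleton.1 hz]
      obtain ⟨j, hj, rfl⟩ := hpt y hy
      have := J.mul_pt_le hσ hj le_rfl
      rwa [J.last] at this
  have hlen := pathLen_of_pairwise hσ' t _ s hJ
  refine iSup_le fun x => ?_
  have key := edist_refine_le h hK hσ' (s₀ := s) (ℓ := |t - s|) hmesh x
    ((List.range I.k).map fun i => I.pt (i + 1)) s ((List.range (J.k + 1)).map J.pt) []
    (by
      rw [← I.range_map, List.range_succ, List.map_append, List.getLast?_append]
      simp [I.last])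
    (by
      rw [← I.range_map, List.isChain_map, List.isChain_range_succ]
      exact fun j hj => I.abs_sub_le_mesh hj)
    (List.pairwise_cons.1 hI).2 hJ
    (by
      intro y hy
      obtain ⟨i, hi, rfl⟩ := List.mem_map.1 hy
      obtain ⟨j, hj, hji⟩ := hfine (i + 1) (List.mem_range.1 hi)
      exact List.mem_map.2 ⟨j, List.mem_range.2 (Nat.lt_succ_iff.2 hj), hji⟩)
    (by simp [pathLen, hlen])
  rw [hlen, J.range_map, chainMap_self_cons h.id_eq, ← I.comp_eq h.id_eq,
    ← J.comp_eq h.id_eq] at key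
  simp only [chainMap, h.id_eq, id] at key
  refine key.trans_eq (congrArg ENNReal.ofReal ?_)
  ring
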